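/- For every real ε ∈ (0,1) there exists n₀ such that for every n ≥ n₀ and every integer m with 1 ≤ m ≤ C(⌊(1−ε)n⌋, ⌊n/2⌋) the following holds: if F ⊆ 2^[n] is a 2-Sperner family such that |F \ S| ≥ m for every S ∈ Σ*(n,2), then |F| ≤ Σ(n,2) − g(⌈n/2⌉+1, m). -/

import Mathlib

attribute [local instance] Classical.propDecidable

/-- A family is 2-Sperner if it contains no chain of three of its members. -/
def TwoSperner {n : ℕ} (F : Finset (Finset (Fin n))) : Prop :=
  ∀ A ∈ F, ∀ B ∈ F, ∀ C ∈ F, ¬ (A ⊂ B ∧ B ⊂ C)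

def Sigma2 (n : ℕ) : ℕ := n.choose (n / 2) + n.choose (n / 2 + 1)

def levelFam (n k : ℕ) : Finset (Finset (Fin n)) :=
  Finset.univ.filter (fun S => S.card = k)

def SigmaStar (n : ℕ) : Set (Finset (Finset (Fin n))) :=
  { levelFam n (n / 2) ∪ levelFam n (n / 2 + 1),
    levelFam n ((n + 1) / 2 - 1) ∪ levelFam n ((n + 1) / 2) }

/-- The generalized binomial coefficient `C(x,j) = x(x−1)⋯(x−j+1)/j!` for real `x`. -/
noncomputable def genChoose (x : ℝ) (j : ℕ) : ℝ :=
  (descPochhammer ℝ j).eval x / (Nat.factorial j)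

/-- `x(l,m)`: the unique real `x ≥ l−1` with `C(x,l) = m` (for `m > 0`). -/
noncomputable def xval (l : ℕ) (m : ℝ) : ℝ :=
  if h : ∃ x : ℝ, (l : ℝ) - 1 ≤ x ∧ genChoose x l = m then h.choose else 0

/-- `g(l,m) = C(x(l,m), l−1) − C(x(l,m), l)`. -/
noncomputable def gval (l : ℕ) (m : ℝ) : ℝ :=
  genChoose (xval l m) (l - 1) - genChoose (xval l m) l

/-!
The minimal members of a 2-Sperner family form an antichain `A`, and the other members form a second
antichain `B`. Replacing the members of an antichain that lie above a middle level by their shadows,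
level by level, and treating those below dually, turns it into a family inside that level which is
at least as large. Lovász's form of the Kruskal-Katona theorem quantifies how much is gained on the
way by the members outside the two chosen levels, and the gains add up to at least `g`.

For odd `n` both antichains are compared with the same one of the two equal middle levels. For even
`n` one of them has to be compared with a level next to the middle one, across which shadows need
not grow. They do grow for families filling at most half of the middle level. Since no member of `B`
lies below a member of `A`, the sets of the middle level below a member of `A` and those above a
member of `B` are distinct, so one of the two collections is that small.
-/

open Finset
open scoped FinsetFamily

section GenChoose

variable {x y : ℝ} {j : ℕ}

lemma genChoose_zero_right (x : ℝ) : genChoose x 0 = 1 := by simp [genChoose]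

lemma genChoose_natCast (n j : ℕ) : genChoose n j = n.choose j :=
  (Nat.cast_choose_eq_descPochhammer_div ℝ n j).symm

lemma genChoose_succ_right_eq (x : ℝ) (j : ℕ) :
    genChoose x (j + 1) * (j + 1) = genChoose x j * (x - j) := by
  simp only [genChoose, descPochhammer_succ_eval, Nat.factorial_succ, Nat.cast_mul,
    Nat.cast_add_one]
  field_simp

lemma add_one_mul_genChoose_eq (x : ℝ) (j : ℕ) :
    (x + 1) * genChoose x j = genChoose (x + 1) (j + 1) * (j + 1) := by
  simp only [genChoose, descPochhammer_eval_eq_prod_range, prod_range_succ', Nat.factorial_succ,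
    Nat.cast_mul, Nat.cast_add_one, Nat.cast_zero, sub_zero, add_sub_add_right_eq_sub]
  field_simp

lemma genChoose_add_one_mul_sub (x : ℝ) (j : ℕ) :
    genChoose (x + 1) j * (x + 1 - j) = (x + 1) * genChoose x j := by
  rw [add_one_mul_genChoose_eq, genChoose_succ_right_eq]

lemma genChoose_nonneg (hx : (j : ℝ) - 1 ≤ x) : 0 ≤ genChoose x j :=
  div_nonneg (descPochhammer_nonneg hx) (by positivity)

lemma genChoose_pos (hx : (j : ℝ) - 1 < x) : 0 < genChoose x j :=
  div_pos (descPochhammer_pos hx) (by positivity)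

lemma genChoose_le_genChoose (hx : (j : ℝ) - 1 ≤ x) (hxy : x ≤ y) :
    genChoose x j ≤ genChoose y j :=
  div_le_div_of_nonneg_right (monotoneOn_descPochhammer_eval j hx (hx.trans hxy) hxy)
    (by positivity)

lemma continuous_genChoose (j : ℕ) : Continuous fun x : ℝ ↦ genChoose x j :=
  continuous_descPochhammer_eval.div_const _

lemma strictMonoOn_genChoose_succ (j : ℕ) :
    StrictMonoOn (fun x : ℝ ↦ genChoose x (j + 1)) (Set.Ici (j : ℝ)) := by
  intro x hx y _ hxy
  rw [Set.mem_Ici] at hx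
  refine lt_of_mul_lt_mul_right ?_ (by positivity : (0 : ℝ) ≤ j + 1)
  calc genChoose x (j + 1) * (j + 1)
      = genChoose x j * (x - j) := genChoose_succ_right_eq x j
    _ ≤ genChoose y j * (x - j) :=
        mul_le_mul_of_nonneg_right (genChoose_le_genChoose (by linarith) hxy.le) (by linarith)
    _ < genChoose y j * (y - j) :=
        mul_lt_mul_of_pos_left (by linarith) (genChoose_pos (by linarith))
    _ = genChoose y (j + 1) * (j + 1) := (genChoose_succ_right_eq y j).symm

lemma genChoose_le_genChoose_add_natCast (hx : (j : ℝ) ≤ x) (d : ℕ) :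
    genChoose x j ≤ genChoose (x + d) (j + d) := by
  induction d with
  | zero => simp
  | succ d ih =>
    have hnonneg : 0 ≤ genChoose (x + d) (j + d) := genChoose_nonneg (by push_cast; linarith)
    have hstep := add_one_mul_genChoose_eq (x + d) (j + d)
    push_cast at hstep ⊢
    rw [← add_assoc x, ← add_assoc j]
    refine ih.trans (le_of_mul_le_mul_right ?_ (by positivity : (0 : ℝ) < j + d + 1))
    rw [← hstep, mul_comm]
    exact mul_le_mul_of_nonneg_right (by linarith) hnonneg

/- Bernoulli's inequality `(1 + δ) ^ j ≥ 1 + j * δ`, with `y = (1 + δ) * x`, applied to the factors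
of `genChoose y j`, each of which grows at least as fast as `x`. -/
lemma genChoose_mul_add_le (hx₀ : 0 < x) (hx : (j : ℝ) - 1 ≤ x) (hxy : x ≤ y) :
    genChoose x j * (x + j * (y - x)) ≤ genChoose y j * x := by
  induction j with
  | zero => simp [genChoose_zero_right]
  | succ j ih =>
    push_cast at hx ⊢
    have hj : (0 : ℝ) ≤ j := by positivity
    have hCx : 0 ≤ genChoose x j := genChoose_nonneg (by linarith)
    have hCy : 0 ≤ genChoose y j := genChoose_nonneg (by linarith)
    have hfactor : (x - j) * y ≤ (y - j) * x := by
      linarith [mul_le_mul_of_nonneg_left hxy hj]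
    have hbernoulli : (x + (j + 1) * (y - x)) * x ≤ (x + j * (y - x)) * y := by
      linarith [mul_nonneg hj (sq_nonneg (y - x))]
    refine le_of_mul_le_mul_right ?_ (by positivity : (0 : ℝ) < (j + 1) * x)
    calc genChoose x (j + 1) * (x + (j + 1) * (y - x)) * ((j + 1) * x)
        = genChoose x (j + 1) * (j + 1) * ((x + (j + 1) * (y - x)) * x) := by ring
      _ = genChoose x j * (x - j) * ((x + (j + 1) * (y - x)) * x) := by
          rw [genChoose_succ_right_eq]
      _ ≤ genChoose x j * (x - j) * ((x + j * (y - x)) * y) :=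
          mul_le_mul_of_nonneg_left hbernoulli (mul_nonneg hCx (by linarith))
      _ = genChoose x j * (x + j * (y - x)) * ((x - j) * y) := by ring
      _ ≤ genChoose y j * x * ((y - j) * x) :=
          mul_le_mul (ih (by linarith)) hfactor
            (mul_nonneg (by linarith) (by linarith)) (by positivity)
      _ = genChoose y j * (y - j) * x * x := by ring
      _ = genChoose y (j + 1) * x * ((j + 1) * x) := by rw [← genChoose_succ_right_eq]; ring

end GenChoose

section Gval

variable {s : ℕ} {m : ℝ}

lemma exists_genChoose_succ_eq (s : ℕ) (hm : 0 ≤ m) :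
    ∃ x : ℝ, (s : ℝ) ≤ x ∧ genChoose x (s + 1) = m := by
  have hlow : genChoose (s : ℝ) (s + 1) = 0 := by simp [genChoose_natCast]
  have hself : genChoose ((s + 1 : ℕ) : ℝ) (s + 1) = 1 := by
    rw [genChoose_natCast, Nat.choose_self, Nat.cast_one]
  have hhigh : m ≤ genChoose (s + 1 + m) (s + 1) := by
    have hgrowth := genChoose_mul_add_le (x := (s + 1 : ℕ)) (y := s + 1 + m) (j := s + 1)
      (by positivity) (by simp) (by push_cast; linarith)
    rw [hself] at hgrowth
    push_cast at hgrowth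
    refine le_of_mul_le_mul_right ?_ (by positivity : (0 : ℝ) < s + 1)
    linarith
  obtain ⟨x, hx, hxm⟩ := intermediate_value_Icc (by linarith : (s : ℝ) ≤ s + 1 + m)
    (continuous_genChoose (s + 1)).continuousOn ⟨hlow.trans_le hm, hhigh⟩
  exact ⟨x, hx.1, hxm⟩

lemma xval_succ_spec (s : ℕ) (hm : 0 ≤ m) :
    (s : ℝ) ≤ xval (s + 1) m ∧ genChoose (xval (s + 1) m) (s + 1) = m := by
  have hex : ∃ x : ℝ, ((s + 1 : ℕ) : ℝ) - 1 ≤ x ∧ genChoose x (s + 1) = m := by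
    simpa using exists_genChoose_succ_eq s hm
  rw [xval, dif_pos hex]
  simpa using hex.choose_spec

lemma xval_succ_le_iff (hm : 0 ≤ m) {y : ℝ} (hy : (s : ℝ) ≤ y) :
    xval (s + 1) m ≤ y ↔ m ≤ genChoose y (s + 1) := by
  obtain ⟨hx, hxm⟩ := xval_succ_spec s hm
  rw [← (strictMonoOn_genChoose_succ s).le_iff_le hx hy, hxm]

lemma xval_succ_le_xval_succ {m₁ m₂ : ℝ} (hm₁ : 0 ≤ m₁) (h : m₁ ≤ m₂) :
    xval (s + 1) m₁ ≤ xval (s + 1) m₂ := by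
  obtain ⟨hx, hxm⟩ := xval_succ_spec s (hm₁.trans h)
  rwa [xval_succ_le_iff hm₁ hx, hxm]

lemma succ_le_xval_succ (hm : 1 ≤ m) : (s : ℝ) + 1 ≤ xval (s + 1) m := by
  obtain ⟨hx, hxm⟩ := xval_succ_spec s (zero_le_one.trans hm)
  have hself : genChoose ((s : ℝ) + 1) (s + 1) = 1 := by
    simpa using genChoose_natCast (s + 1) (s + 1)
  rw [← (strictMonoOn_genChoose_succ s).le_iff_le (by simp) hx, hself, hxm]
  exact hm

lemma gval_succ_mul_succ (s : ℕ) (m : ℝ) :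
    gval (s + 1) m * (s + 1) =
      genChoose (xval (s + 1) m) s * (2 * s + 1 - xval (s + 1) m) := by
  rw [gval, Nat.add_sub_cancel, sub_mul, genChoose_succ_right_eq]
  ring

lemma gval_succ_mul_sub (hm : 0 ≤ m) :
    gval (s + 1) m * (xval (s + 1) m - s) = m * (2 * s + 1 - xval (s + 1) m) := by
  rw [gval, Nat.add_sub_cancel, sub_mul, ← genChoose_succ_right_eq, (xval_succ_spec s hm).2]
  ring

lemma gval_succ_nonneg (hm : 0 ≤ m) (hm' : m ≤ genChoose (2 * s + 1) (s + 1)) :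
    0 ≤ gval (s + 1) m := by
  have hx := (xval_succ_spec s hm).1
  have hx' : xval (s + 1) m ≤ 2 * s + 1 := by
    rwa [xval_succ_le_iff hm (by linarith [Nat.cast_nonneg (α := ℝ) s])]
  refine nonneg_of_mul_nonneg_left ?_ (by positivity : (0 : ℝ) < s + 1)
  rw [gval_succ_mul_succ]
  exact mul_nonneg (genChoose_nonneg (by linarith)) (by linarith)

lemma genChoose_mul_sub_le {x y : ℝ} (hx : (s : ℝ) ≤ x) (hxy : x ≤ y) (hy : y ≤ 2 * s - 1) :
    genChoose x s * (2 * s + 1 - x) ≤ genChoose y s * (2 * s + 1 - y) := by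
  have hx₀ : 0 < x := by linarith
  have hCx : 0 ≤ genChoose x s := genChoose_nonneg (by linarith)
  have hquadratic : (2 * s + 1 - x) * x ≤ (x + s * (y - x)) * (2 * s + 1 - y) := by
    have hs : x ≤ s * (2 * s + 1 - y) := by
      linarith [mul_le_mul_of_nonneg_left (by linarith : 2 ≤ 2 * s + 1 - y) s.cast_nonneg]
    linarith [mul_le_mul_of_nonneg_left hs (sub_nonneg.2 hxy)]
  refine le_of_mul_le_mul_right ?_ hx₀
  calc genChoose x s * (2 * s + 1 - x) * x
      = genChoose x s * ((2 * s + 1 - x) * x) := by ring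
    _ ≤ genChoose x s * ((x + s * (y - x)) * (2 * s + 1 - y)) := by gcongr
    _ = genChoose x s * (x + s * (y - x)) * (2 * s + 1 - y) := by ring
    _ ≤ genChoose y s * x * (2 * s + 1 - y) :=
        mul_le_mul_of_nonneg_right (genChoose_mul_add_le hx₀ (by linarith) hxy) (by linarith)
    _ = genChoose y s * (2 * s + 1 - y) * x := by ring

lemma monotoneOn_gval_succ (hs : 1 ≤ s) :
    MonotoneOn (gval (s + 1)) (Set.Icc 0 (genChoose (2 * s - 1) (s + 1))) := by
  intro m₁ hm₁ m₂ hm₂ hle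
  have hs' : (1 : ℝ) ≤ s := by exact_mod_cast hs
  refine le_of_mul_le_mul_right ?_ (by positivity : (0 : ℝ) < s + 1)
  rw [gval_succ_mul_succ, gval_succ_mul_succ]
  exact genChoose_mul_sub_le (xval_succ_spec s hm₁.1).1 (xval_succ_le_xval_succ hm₁.1 hle)
    ((xval_succ_le_iff hm₂.1 (by linarith)).2 hm₂.2)

lemma four_mul_genChoose_mul_le (hs : 2 < s) :
    4 * genChoose (2 * s - 3) s * s ≤ genChoose (2 * s - 1) (s + 1) * (s + 1) := by
  have hs' : (2 : ℝ) < s := by exact_mod_cast hs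
  have hC : 0 ≤ genChoose (2 * s - 3) s := genChoose_nonneg (by linarith)
  have hshift : genChoose (2 * s - 2) s * (s - 2) = (2 * s - 2) * genChoose (2 * s - 3) s := by
    convert genChoose_add_one_mul_sub (2 * s - 3 : ℝ) s using 2 <;> ring_nf
  have hshift' :
      (2 * s - 1) * genChoose (2 * s - 2) s = genChoose (2 * s - 1) (s + 1) * (s + 1) := by
    convert add_one_mul_genChoose_eq (2 * s - 2 : ℝ) s using 2 <;> ring_nf
  refine le_of_mul_le_mul_right ?_ (by linarith : (0 : ℝ) < s - 2)
  calc 4 * genChoose (2 * s - 3) s * s * (s - 2)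
      = genChoose (2 * s - 3) s * (4 * s * (s - 2)) := by ring
    _ ≤ genChoose (2 * s - 3) s * ((2 * s - 1) * (2 * s - 2)) :=
        mul_le_mul_of_nonneg_left (by linarith) hC
    _ = (2 * s - 1) * ((2 * s - 2) * genChoose (2 * s - 3) s) := by ring
    _ = (2 * s - 1) * genChoose (2 * s - 2) s * (s - 2) := by rw [← hshift]; ring
    _ = genChoose (2 * s - 1) (s + 1) * (s + 1) * (s - 2) := by rw [hshift']

end Gval

section Shadow

variable {α : Type*} [DecidableEq α] {T G : Finset (Finset α)} {r : ℕ}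

lemma sized_memberSubfamily (hT : (T : Set (Finset α)).Sized (r + 1)) (v : α) :
    (T.memberSubfamily v : Set (Finset α)).Sized r := by
  intro B hB
  rw [mem_coe, mem_memberSubfamily] at hB
  have hcard := hT (mem_coe.2 hB.1)
  rwa [card_insert_of_notMem hB.2, Nat.add_right_cancel_iff] at hcard

lemma shadow_memberSubfamily_subset (hTG : ∂ T ⊆ G) (v : α) :
    ∂ (T.memberSubfamily v) ⊆ G.memberSubfamily v := by
  intro B hB
  simp only [mem_shadow_iff_insert_mem, mem_memberSubfamily, mem_insert, not_or] at hB ⊢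
  obtain ⟨a, ha, haB, hva, hvB⟩ := hB
  refine ⟨hTG (mem_shadow_iff_insert_mem.2 ⟨a, ?_, ?_⟩), hvB⟩
  · simpa only [mem_insert, not_or] using ⟨Ne.symm hva, ha⟩
  · rwa [insert_comm]

lemma card_memberSubfamily_add_card_memberSubfamily_le (hTG : ∂ T ⊆ G) (v : α) :
    #(T.memberSubfamily v) + #(G.memberSubfamily v) ≤ #G := by
  have hsub : T.memberSubfamily v ⊆ G.nonMemberSubfamily v := by
    intro B hB
    rw [mem_memberSubfamily] at hB
    exact mem_nonMemberSubfamily.2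
      ⟨hTG (mem_shadow_iff_insert_mem.2 ⟨v, hB.2, hB.1⟩), hB.2⟩
  calc #(T.memberSubfamily v) + #(G.memberSubfamily v)
      ≤ #(G.nonMemberSubfamily v) + #(G.memberSubfamily v) :=
        Nat.add_le_add_right (card_le_card hsub) _
    _ = #G := by rw [add_comm, card_memberSubfamily_add_card_nonMemberSubfamily]

lemma eq_empty_of_shadow_eq_empty (hT : (T : Set (Finset α)).Sized (r + 1)) (h : ∂ T = ∅) :
    T = ∅ := by
  refine eq_empty_of_forall_notMem fun A hA ↦ ?_
  obtain ⟨a, ha⟩ : A.Nonempty := by rw [← card_pos, hT hA]; exact r.succ_pos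
  exact notMem_empty _ (h ▸ erase_mem_shadow hA ha)

lemma sum_card_memberSubfamily [Fintype α] (hT : (T : Set (Finset α)).Sized r) :
    ∑ v, #(T.memberSubfamily v) = #T * r := by
  have hcard (v : α) : #(T.memberSubfamily v) = #{A ∈ T | v ∈ A} :=
    card_image_of_injOn fun A hA B hB h ↦ by
      simp only [coe_filter, Set.mem_ofPred_eq] at hA hB
      rw [← insert_erase hA.2, h, insert_erase hB.2]
  simp_rw [hcard]
  calc ∑ v, #{A ∈ T | v ∈ A}
      = ∑ A ∈ T, #{v | v ∈ A} := sum_card_bipartiteAbove_eq_sum_card_bipartiteBelow (· ∈ ·)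
    _ = #T * r := sum_const_nat fun A hA ↦ by rw [filter_univ_mem, hT hA]

lemma mul_card_le_of_forall_mul_card_memberSubfamily_le [Finite α] {c : ℝ}
    (hT : (T : Set (Finset α)).Sized (r + 2)) (hG : (G : Set (Finset α)).Sized (r + 1))
    (h : ∀ v, (r + 1) * (#(T.memberSubfamily v) : ℝ) ≤ c * #(G.memberSubfamily v)) :
    (r + 2) * (#T : ℝ) ≤ c * #G := by
  have := Fintype.ofFinite α
  have hsum := sum_le_sum fun v (_ : v ∈ univ) ↦ h v
  rw [← mul_sum, ← mul_sum, ← Nat.cast_sum, ← Nat.cast_sum, sum_card_memberSubfamily hT,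
    sum_card_memberSubfamily hG] at hsum
  push_cast at hsum
  refine le_of_mul_le_mul_left ?_ (by positivity : (0 : ℝ) < r + 1)
  linarith

lemma mul_card_memberSubfamily_le {x : ℝ} (hx : (r : ℝ) ≤ x) (hTG : ∂ T ⊆ G) (v : α)
    (hG : #G ≤ genChoose x (r + 1)) (hv : genChoose (x - 1) r ≤ #(G.memberSubfamily v)) :
    (r + 1) * (#(T.memberSubfamily v) : ℝ) ≤ (x - (r + 1)) * #(G.memberSubfamily v) := by
  have hx₀ : 0 ≤ x := r.cast_nonneg.trans hx
  have hadd : (#(T.memberSubfamily v) + #(G.memberSubfamily v) : ℝ) ≤ #G := by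
    exact_mod_cast card_memberSubfamily_add_card_memberSubfamily_le hTG v
  have hmul : #G * (r + 1) ≤ x * (#(G.memberSubfamily v) : ℝ) :=
    calc #G * (r + 1) ≤ genChoose x (r + 1) * (r + 1) := by gcongr
      _ = x * genChoose (x - 1) r := by
          rw [← sub_add_cancel x 1, ← add_one_mul_genChoose_eq, sub_add_cancel]
      _ ≤ x * #(G.memberSubfamily v) := by gcongr
  linarith [mul_le_mul_of_nonneg_right hadd (by positivity : (0 : ℝ) ≤ r + 1)]

/- Lovász's argument: it suffices to bound the link of each vertex `v` in `T`. If the link of `v`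
in `G` has at most `C(x - 1, r)` members this is the induction hypothesis, and otherwise it follows
from counting the members of `G` that avoid `v`. -/
lemma mul_card_le_of_shadow_subset [Finite α] {x : ℝ} (hx : (r : ℝ) ≤ x)
    (hT : (T : Set (Finset α)).Sized (r + 2)) (hG : (G : Set (Finset α)).Sized (r + 1))
    (hTG : ∂ T ⊆ G) (hcard : #G ≤ genChoose x (r + 1)) :
    (r + 2) * (#T : ℝ) ≤ (x - (r + 1)) * #G := by
  induction r generalizing x T G with
  | zero =>
    refine mul_card_le_of_forall_mul_card_memberSubfamily_le hT hG fun v ↦ ?_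
    rcases le_or_gt (genChoose (x - 1) 0) #(G.memberSubfamily v) with hv | hv
    · exact mul_card_memberSubfamily_le hx hTG v hcard hv
    have hGv : G.memberSubfamily v = ∅ := by
      rwa [genChoose_zero_right, Nat.cast_lt_one, card_eq_zero] at hv
    have hTv : T.memberSubfamily v = ∅ :=
      eq_empty_of_shadow_eq_empty (sized_memberSubfamily hT v)
        (subset_empty.1 (hGv ▸ shadow_memberSubfamily_subset hTG v))
    simp [hGv, hTv]
  | succ r ih =>
    refine mul_card_le_of_forall_mul_card_memberSubfamily_le hT hG fun v ↦ ?_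
    rcases le_or_gt (genChoose (x - 1) (r + 1)) #(G.memberSubfamily v) with hv | hv
    · exact mul_card_memberSubfamily_le hx hTG v hcard hv
    push_cast at hx ⊢
    have hind := ih (by linarith : (r : ℝ) ≤ x - 1) (sized_memberSubfamily hT v)
      (sized_memberSubfamily hG v) (shadow_memberSubfamily_subset hTG v) hv.le
    linarith

/- If `#(∂ T)` exceeds `C(y, r)`, the claim is just `#T ≤ C(y, r + 1)`. -/
lemma mul_card_le_mul_card_shadow [Finite α] {y : ℝ} (hy : (r : ℝ) ≤ y)
    (hT : (T : Set (Finset α)).Sized (r + 1)) (hcard : #T ≤ genChoose y (r + 1)) :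
    (r + 1) * (#T : ℝ) ≤ (y - r) * #(∂ T) := by
  rcases le_or_gt (genChoose y r) #(∂ T) with hle | hlt
  · calc (r + 1) * (#T : ℝ)
        ≤ genChoose y (r + 1) * (r + 1) := by rw [mul_comm]; gcongr
      _ = genChoose y r * (y - r) := genChoose_succ_right_eq y r
      _ ≤ #(∂ T) * (y - r) := mul_le_mul_of_nonneg_right hle (by linarith)
      _ = (y - r) * #(∂ T) := mul_comm _ _
  rcases r with _ | r
  · have hempty : ∂ T = ∅ := by
      rwa [genChoose_zero_right, Nat.cast_lt_one, card_eq_zero] at hlt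
    simp [eq_empty_of_shadow_eq_empty hT hempty]
  · push_cast at hy ⊢
    have hmul := mul_card_le_of_shadow_subset (by linarith) hT hT.shadow subset_rfl hlt.le
    linarith

lemma card_add_div_mul_gval_le_card_shadow [Finite α] {s : ℕ} {m : ℝ} (hsr : s ≤ r)
    (hT : (T : Set (Finset α)).Sized (r + 1)) (hm : 1 ≤ m) (hTm : #T ≤ m) :
    #T + #T / m * gval (s + 1) m ≤ #(∂ T) := by
  obtain ⟨d, rfl⟩ := Nat.exists_eq_add_of_le hsr
  have hm₀ : 0 ≤ m := by linarith
  have hx := succ_le_xval_succ (s := s) hm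
  have hg := gval_succ_mul_sub (s := s) hm₀
  set x := xval (s + 1) m
  have hTx : #T ≤ genChoose (x + d) (s + d + 1) :=
    calc (#T : ℝ) ≤ genChoose x (s + 1) := by rwa [(xval_succ_spec s hm₀).2]
      _ ≤ genChoose (x + d) (s + 1 + d) :=
          genChoose_le_genChoose_add_natCast (by push_cast; exact hx) d
      _ = genChoose (x + d) (s + d + 1) := by rw [add_right_comm]
  have hmul := mul_card_le_mul_card_shadow (by push_cast; linarith) hT hTx
  push_cast at hmul
  refine le_of_mul_le_mul_right ?_ (by linarith : 0 < x - s)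
  calc (#T + #T / m * gval (s + 1) m) * (x - s)
      = #T * (x - s) + #T / m * (m * (2 * s + 1 - x)) := by rw [← hg]; ring
    _ = (s + 1) * #T := by field_simp; ring
    _ ≤ (s + d + 1) * #T := by gcongr; linarith [d.cast_nonneg (α := ℝ)]
    _ ≤ #(∂ T) * (x - s) := by linarith

lemma card_le_card_shadow_of_two_mul_card_le [Finite α] {k : ℕ}
    (hT : (T : Set (Finset α)).Sized (k + 1)) (hcard : 2 * #T ≤ (2 * (k + 1)).choose (k + 1)) :
    #T ≤ #(∂ T) := by
  have hhalf : (2 * (k + 1)).choose (k + 1) = 2 * (2 * k + 1).choose (k + 1) := by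
    rw [mul_add_one, Nat.choose_succ_succ', Nat.choose_symm_half, ← two_mul]
  have hle : (#T : ℝ) ≤ genChoose ((2 * k + 1 : ℕ) : ℝ) (k + 1) := by
    rw [genChoose_natCast]
    exact_mod_cast (by linarith : #T ≤ (2 * k + 1).choose (k + 1))
  have hmul := mul_card_le_mul_card_shadow (by push_cast; linarith) hT hle
  refine Nat.le_of_mul_le_mul_left ?_ k.succ_pos
  push_cast at hmul
  rify
  linarith

end Shadow

section ShadowGain

/-- `IsShadowGain α φ` says that every family `T` of sets of a common size `r ≥ card α / 2 + 1` has
a shadow with at least `φ #T` more members than `T`, where `φ` is monotone and subadditive. -/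
structure IsShadowGain (α : Type*) [Fintype α] [DecidableEq α] (φ : ℕ → ℝ) : Prop where
  mono : Monotone φ
  add_le (a b : ℕ) : φ (a + b) ≤ φ a + φ b
  card_add_le_card_shadow {r : ℕ} {T : Finset (Finset α)} (hr : Fintype.card α + 2 ≤ 2 * r)
    (hT : (T : Set (Finset α)).Sized r) : #T + φ #T ≤ #(∂ T)

/-- The gain `gval (s + 1) m`, scaled down linearly for families with fewer than `m` members, which
is what makes it subadditive. -/
noncomputable def truncatedGval (s m t : ℕ) : ℝ := (min t m : ℕ) / m * gval (s + 1) m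

variable {s m : ℕ}

lemma truncatedGval_of_le {t : ℕ} (h : t ≤ m) : truncatedGval s m t = t / m * gval (s + 1) m := by
  rw [truncatedGval, min_eq_left h]

lemma truncatedGval_of_ge {t : ℕ} (hm : m ≠ 0) (h : m ≤ t) :
    truncatedGval s m t = gval (s + 1) m := by
  rw [truncatedGval, min_eq_right h, div_self (Nat.cast_ne_zero.2 hm), one_mul]

lemma monotone_truncatedGval (hg : 0 ≤ gval (s + 1) m) : Monotone (truncatedGval s m) := by
  intro a b hab
  unfold truncatedGval
  gcongr

lemma truncatedGval_add_le (hg : 0 ≤ gval (s + 1) m) (a b : ℕ) :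
    truncatedGval s m (a + b) ≤ truncatedGval s m a + truncatedGval s m b := by
  have hmin : min (a + b) m ≤ min a m + min b m := by omega
  simp only [truncatedGval, ← add_mul, ← add_div]
  gcongr
  exact_mod_cast hmin

lemma gval_succ_mul_le {m : ℝ} (hs : 2 < s) (hm : 0 ≤ m) (hm' : m ≤ genChoose (2 * s - 3) (s + 1)) :
    gval (s + 1) m * s ≤ genChoose (2 * s - 1) (s + 1) := by
  have hs' : (3 : ℝ) ≤ s := by exact_mod_cast hs
  have hx : xval (s + 1) m ≤ 2 * s - 3 := (xval_succ_le_iff hm (by linarith)).2 hm'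
  have hg : gval (s + 1) m * (s + 1) ≤ 4 * genChoose (2 * s - 3) s := by
    rw [gval_succ_mul_succ]
    convert genChoose_mul_sub_le (xval_succ_spec s hm).1 hx (by linarith) using 1
    ring
  refine le_of_mul_le_mul_right ?_ (by positivity : (0 : ℝ) < s + 1)
  calc gval (s + 1) m * s * (s + 1) = gval (s + 1) m * (s + 1) * s := by ring
    _ ≤ 4 * genChoose (2 * s - 3) s * s := by gcongr
    _ ≤ genChoose (2 * s - 1) (s + 1) * (s + 1) := four_mul_genChoose_mul_le hs

variable {α : Type*} [DecidableEq α] [Fintype α] {T : Finset (Finset α)} {r : ℕ}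

/- Below `C(2s - 1, s + 1)` members the gain from Lovász's theorem increases with `#T`; beyond, the
local LYM inequality suffices. -/
lemma card_add_gval_le_card_shadow (hs : 2 < s) (hα : Fintype.card α ≤ 2 * s) (hsr : s < r)
    (hT : (T : Set (Finset α)).Sized r) {m : ℝ} (hm : 1 ≤ m)
    (hm' : m ≤ genChoose (2 * s - 3) (s + 1)) (hmT : m ≤ #T) :
    #T + gval (s + 1) m ≤ #(∂ T) := by
  have hs' : (3 : ℝ) ≤ s := by exact_mod_cast hs
  obtain ⟨r, rfl⟩ : ∃ q, r = q + 1 := ⟨r - 1, by omega⟩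
  rcases le_total (#T : ℝ) (genChoose (2 * s - 1) (s + 1)) with hle | hge
  · have hg : gval (s + 1) m ≤ gval (s + 1) #T :=
      monotoneOn_gval_succ (by omega) ⟨by linarith, hmT.trans hle⟩ ⟨by linarith, hle⟩ hmT
    have hgain := card_add_div_mul_gval_le_card_shadow (s := s) (by omega) hT (hm.trans hmT) le_rfl
    rw [div_self (by linarith), one_mul] at hgain
    linarith
  · have hlym : (#T : ℝ) * (s + 1) ≤ #(∂ T) * s := by
      have hlym := card_mul_le_card_shadow_mul hT
      exact_mod_cast (Nat.mul_le_mul_left _ (by omega)).trans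
        (hlym.trans (Nat.mul_le_mul_left _ (by omega)))
    have hg := gval_succ_mul_le hs (by linarith) hm'
    refine le_of_mul_le_mul_right ?_ (by linarith : (0 : ℝ) < s)
    linarith

lemma isShadowGain_truncatedGval (hα : Fintype.card α ≤ 2 * s) (hα' : 2 * s ≤ Fintype.card α + 1)
    (hm : 1 ≤ m) (hm' : m ≤ (2 * s - 3).choose (s + 1)) :
    IsShadowGain α (truncatedGval s m) := by
  have hs : s + 1 ≤ 2 * s - 3 := by
    by_contra! h
    rw [Nat.choose_eq_zero_of_lt h] at hm'
    omega
  have hm₁ : (1 : ℝ) ≤ m := by exact_mod_cast hm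
  have hm₂ : (m : ℝ) ≤ genChoose (2 * s - 3) (s + 1) := by
    have hcast : ((2 * s - 3 : ℕ) : ℝ) = 2 * s - 3 := by push_cast [show 3 ≤ 2 * s by omega]; rfl
    rw [← hcast, genChoose_natCast]
    exact_mod_cast hm'
  have hs' : (4 : ℝ) ≤ s := by exact_mod_cast (by omega : 4 ≤ s)
  have hg : 0 ≤ gval (s + 1) (m : ℝ) := gval_succ_nonneg (by linarith)
    (hm₂.trans (genChoose_le_genChoose (by push_cast; linarith) (by linarith)))
  refine ⟨monotone_truncatedGval hg, truncatedGval_add_le hg, fun {r T} hr hT ↦ ?_⟩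
  obtain ⟨q, rfl⟩ : ∃ q, r = q + 1 := ⟨r - 1, by omega⟩
  rcases le_total #T m with hle | hge
  · rw [truncatedGval_of_le hle]
    exact card_add_div_mul_gval_le_card_shadow (by omega) hT hm₁ (by exact_mod_cast hle)
  · rw [truncatedGval_of_ge (by omega) hge]
    exact card_add_gval_le_card_shadow (by omega) hα (by omega) hT hm₁ hm₂ (by exact_mod_cast hge)

end ShadowGain

section Antichain

variable {α : Type*}

lemma card_filter_le_card_eq_slice_add (A : Finset (Finset α)) (r : ℕ) :
    #{S ∈ A | r ≤ #S} = #(A.slice r) + #{S ∈ A | r + 1 ≤ #S} := by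
  classical
  rw [← card_union_of_disjoint]
  · congr 1
    ext S
    simp only [mem_filter, mem_union, mem_slice]
    grind
  · refine disjoint_left.2 fun S hS hS' ↦ ?_
    rw [mem_slice] at hS
    rw [mem_filter] at hS'
    omega

variable [DecidableEq α] {A : Finset (Finset α)} {r : ℕ}

lemma card_falling (hA : IsAntichain (· ⊆ ·) (A : Set (Finset α))) (r : ℕ) :
    #(falling r A) = #(A.slice r) + #(∂ (falling (r + 1) A)) := by
  rw [← slice_union_shadow_falling_succ,
    card_union_of_disjoint (Finset.IsAntichain.disjoint_slice_shadow_falling hA)]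

variable [Fintype α]

lemma isAntichain_compls (hA : IsAntichain (· ⊆ ·) (A : Set (Finset α))) :
    IsAntichain (· ⊆ ·) (Aᶜˢ : Set (Finset α)) := by
  rw [coe_compls]
  exact hA.image_compl

lemma card_compls_filter_le_card (A : Finset (Finset α)) {i j : ℕ}
    (hij : i + j = Fintype.card α) :
    #{S ∈ Aᶜˢ | i + 1 ≤ #S} = #{S ∈ A | #S < j} := by
  rw [← card_compls]
  congr 1
  ext S
  have hS := card_add_card_compl S
  simp only [mem_compls, mem_filter, compl_compl, and_congr_right_iff]
  omega

lemma card_le_card_shadow_of_card_lt {T : Finset (Finset α)} (hr : Fintype.card α < 2 * r)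
    (hT : (T : Set (Finset α)).Sized r) : #T ≤ #(∂ T) := by
  have hlym : #T * r ≤ #(∂ T) * (Fintype.card α - r + 1) := card_mul_le_card_shadow_mul hT
  exact Nat.le_of_mul_le_mul_right (hlym.trans (Nat.mul_le_mul_left _ (by omega))) (by omega)

lemma card_filter_le_card_falling (hA : IsAntichain (· ⊆ ·) (A : Set (Finset α)))
    (hr : Fintype.card α ≤ 2 * r + 1) : #{S ∈ A | r ≤ #S} ≤ #(falling r A) := by
  induction hd : Fintype.card α + 1 - r generalizing r with
  | zero =>
    rw [filter_false_of_mem fun S _ hS ↦ by have := card_le_univ S; omega, card_empty]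
    exact Nat.zero_le _
  | succ d ih =>
    have habove : #{S ∈ A | r + 1 ≤ #S} ≤ #(∂ (falling (r + 1) A)) :=
      (ih (by omega) (by omega)).trans
        (card_le_card_shadow_of_card_lt (by omega) (sized_falling (r + 1) A))
    rw [card_filter_le_card_eq_slice_add, card_falling hA]
    exact Nat.add_le_add_left habove _

lemma card_add_card_le_choose_of_disjoint_compls {T U : Finset (Finset α)} {i j : ℕ}
    (hij : i + j = Fintype.card α) (hT : (T : Set (Finset α)).Sized j)
    (hU : (U : Set (Finset α)).Sized i) (hTU : Disjoint T Uᶜˢ) :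
    #T + #U ≤ (Fintype.card α).choose j := by
  have hUc : (Uᶜˢ : Set (Finset α)).Sized j := by
    rw [← Nat.sub_eq_of_eq_add' hij.symm]
    exact hU.compls
  have hsized : ((T ∪ Uᶜˢ : Finset (Finset α)) : Set (Finset α)).Sized j := by
    rw [coe_union]
    exact Set.sized_union.2 ⟨hT, hUc⟩
  rw [← card_compls U, ← card_union_of_disjoint hTU]
  exact hsized.card_le

lemma card_falling_add_card_shadow_falling_compls_le
    (hA : IsAntichain (· ⊆ ·) (A : Set (Finset α))) {i j : ℕ} (hij : i + j = Fintype.card α) :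
    #(falling j A) + #(∂ (falling (i + 1) Aᶜˢ)) ≤ (Fintype.card α).choose j := by
  refine card_add_card_le_choose_of_disjoint_compls hij (sized_falling j A)
    (sized_falling (i + 1) Aᶜˢ).shadow (disjoint_left.2 fun X hX hX' ↦ ?_)
  obtain ⟨⟨Z, hZ, hXZ⟩, -⟩ := mem_falling.1 hX
  obtain ⟨a, ha, haX⟩ := mem_shadow_iff_insert_mem.1 (mem_compls.1 hX')
  obtain ⟨⟨W, hW, haW⟩, -⟩ := mem_falling.1 haX
  have hWX : Wᶜ ⊂ X := by
    rw [← compl_ssubset_compl, compl_compl]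
    exact (ssubset_insert ha).trans_subset haW
  have hWZ : Wᶜ ⊂ Z := hWX.trans_subset hXZ
  exact hA (mem_compls.1 hW) hZ hWZ.ne hWZ.subset

lemma card_falling_add_card_falling_compls_le {B : Finset (Finset α)} {i j : ℕ}
    (hij : i + j = Fintype.card α) (hBA : ∀ X ∈ B, ∀ Z ∈ A, ¬X ⊆ Z) :
    #(falling j A) + #(falling i Bᶜˢ) ≤ (Fintype.card α).choose j := by
  refine card_add_card_le_choose_of_disjoint_compls hij (sized_falling j A)
    (sized_falling i Bᶜˢ) (disjoint_left.2 fun X hX hX' ↦ ?_)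
  obtain ⟨⟨Z, hZ, hXZ⟩, -⟩ := mem_falling.1 hX
  obtain ⟨⟨W, hW, hXW⟩, -⟩ := mem_falling.1 (mem_compls.1 hX')
  exact hBA Wᶜ (mem_compls.1 hW) Z hZ ((compl_le_iff_compl_le.1 hXW).trans hXZ)

lemma card_add_add_le_choose (hA : IsAntichain (· ⊆ ·) (A : Set (Finset α))) {i j : ℕ}
    (hij : i + j = Fintype.card α) {a b : ℝ}
    (hup : #{S ∈ A | j + 1 ≤ #S} + a ≤ #(∂ (falling (j + 1) A)))
    (hdown : #{S ∈ Aᶜˢ | i + 1 ≤ #S} + b ≤ #(∂ (falling (i + 1) Aᶜˢ))) :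
    #A + (a + b) ≤ (Fintype.card α).choose j := by
  have hcard : #A = #(A.slice j) + #{S ∈ A | j + 1 ≤ #S} + #{S ∈ Aᶜˢ | i + 1 ≤ #S} := by
    rw [card_compls_filter_le_card A hij, ← card_filter_le_card_eq_slice_add,
      ← card_filter_add_card_filter_not (s := A) (fun S ↦ j ≤ #S)]
    simp only [not_le]
  have hlevel := card_falling_add_card_shadow_falling_compls_le hA hij
  rw [card_falling hA] at hlevel
  rify at hlevel
  rw [hcard, Nat.cast_add, Nat.cast_add]
  linarith

end Antichain

section OffLevels

variable {α : Type*}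

/-- The members of `A` outside the two adjacent levels `k` and `k + 1`. -/
noncomputable def offLevels (A : Finset (Finset α)) (k : ℕ) : Finset (Finset α) :=
  {S ∈ A | #S ≠ k ∧ #S ≠ k + 1}

lemma mem_offLevels {A : Finset (Finset α)} {k : ℕ} {S : Finset α} :
    S ∈ offLevels A k ↔ S ∈ A ∧ #S ≠ k ∧ #S ≠ k + 1 := mem_filter

lemma card_offLevels_le (A : Finset (Finset α)) (k : ℕ) :
    #(offLevels A k) ≤ #{S ∈ A | k + 2 ≤ #S} + #{S ∈ A | #S < k} := by
  classical
  refine le_trans (card_le_card fun S hS ↦ ?_) (card_union_le _ _)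
  simp only [mem_offLevels, mem_union, mem_filter] at hS ⊢
  grind

variable [DecidableEq α]

lemma card_offLevels_le_add_sdiff (F A : Finset (Finset α)) (k : ℕ) :
    #(offLevels F k) ≤ #(offLevels A k) + #(offLevels (F \ A) k) := by
  refine le_trans (card_le_card fun S hS ↦ ?_) (card_union_le _ _)
  simp only [mem_offLevels, mem_union, mem_sdiff] at hS ⊢
  tauto

variable [Fintype α] {A : Finset (Finset α)}

lemma card_offLevels_compls (A : Finset (Finset α)) {i k : ℕ} (hik : i + k + 1 = Fintype.card α) :
    #(offLevels Aᶜˢ k) = #(offLevels A i) := by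
  rw [← card_compls]
  congr 1
  ext S
  have hS := card_add_card_compl S
  simp only [mem_compls, mem_offLevels, compl_compl, and_congr_right_iff]
  omega

variable {φ : ℕ → ℝ} {r k : ℕ}

namespace IsShadowGain

lemma card_filter_add_le (hφ : IsShadowGain α φ) (hA : IsAntichain (· ⊆ ·) (A : Set (Finset α)))
    (hr : Fintype.card α + 2 ≤ 2 * r) :
    #{S ∈ A | r ≤ #S} + φ #{S ∈ A | r ≤ #S} ≤ #(∂ (falling r A)) := by
  have hle : #{S ∈ A | r ≤ #S} ≤ #(falling r A) := card_filter_le_card_falling hA (by omega)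
  calc #{S ∈ A | r ≤ #S} + φ #{S ∈ A | r ≤ #S}
      ≤ #(falling r A) + φ #(falling r A) := add_le_add (Nat.cast_le.2 hle) (hφ.mono hle)
    _ ≤ #(∂ (falling r A)) := hφ.card_add_le_card_shadow hr (sized_falling r A)

lemma card_filter_add_succ_le (hφ : IsShadowGain α φ)
    (hA : IsAntichain (· ⊆ ·) (A : Set (Finset α))) (hr : Fintype.card α ≤ 2 * r)
    (hexp : #(falling r A) ≤ #(∂ (falling r A))) :
    #{S ∈ A | r ≤ #S} + φ #{S ∈ A | r + 1 ≤ #S} ≤ #(∂ (falling r A)) := by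
  have hgain := hφ.card_filter_add_le hA (by omega : Fintype.card α + 2 ≤ 2 * (r + 1))
  rw [card_falling hA] at hexp
  rw [card_filter_le_card_eq_slice_add]
  rify at hexp
  push_cast
  linarith

lemma card_add_offLevels_le_choose_half (hφ : IsShadowGain α φ)
    (hA : IsAntichain (· ⊆ ·) (A : Set (Finset α))) (hk : k + k = Fintype.card α) {j : ℕ}
    (hj : k = j ∨ k = j + 1) :
    #A + φ #(offLevels A j) ≤ (Fintype.card α).choose k := by
  have hcard : #(offLevels A j) ≤ #{S ∈ A | k + 1 ≤ #S} + #{S ∈ Aᶜˢ | k + 1 ≤ #S} := by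
    rw [card_compls_filter_le_card A hk]
    refine le_trans (card_le_card fun S hS ↦ ?_) (card_union_le _ _)
    simp only [mem_offLevels, mem_filter, mem_union] at hS ⊢
    grind
  calc #A + φ #(offLevels A j)
      ≤ #A + (φ #{S ∈ A | k + 1 ≤ #S} + φ #{S ∈ Aᶜˢ | k + 1 ≤ #S}) := by
        gcongr
        exact (hφ.mono hcard).trans (hφ.add_le _ _)
    _ ≤ (Fintype.card α).choose k :=
        card_add_add_le_choose hA hk (hφ.card_filter_add_le hA (by omega))
          (hφ.card_filter_add_le (isAntichain_compls hA) (by omega))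

lemma card_add_offLevels_le_choose (hφ : IsShadowGain α φ)
    (hA : IsAntichain (· ⊆ ·) (A : Set (Finset α))) {i : ℕ} (hik : i + (k + 1) = Fintype.card α)
    (hi : i ≤ k + 1) (hk : k ≤ i + 1)
    (hexp : #(falling (i + 1) Aᶜˢ) ≤ #(∂ (falling (i + 1) Aᶜˢ))) :
    #A + φ #(offLevels A k) ≤ (Fintype.card α).choose (k + 1) := by
  have hcard : #(offLevels A k) ≤ #{S ∈ A | k + 2 ≤ #S} + #{S ∈ Aᶜˢ | i + 2 ≤ #S} := by
    rw [card_compls_filter_le_card A (by omega : i + 1 + k = Fintype.card α)]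
    exact card_offLevels_le A k
  calc #A + φ #(offLevels A k)
      ≤ #A + (φ #{S ∈ A | k + 2 ≤ #S} + φ #{S ∈ Aᶜˢ | i + 2 ≤ #S}) := by
        gcongr
        exact (hφ.mono hcard).trans (hφ.add_le _ _)
    _ ≤ (Fintype.card α).choose (k + 1) :=
        card_add_add_le_choose hA hik (hφ.card_filter_add_le hA (by omega))
          (hφ.card_filter_add_succ_le (isAntichain_compls hA) (by omega) hexp)

lemma card_add_offLevels_le_add (hφ : IsShadowGain α φ) {F : Finset (Finset α)} (hAF : A ⊆ F)
    {a b : ℝ} (ha : #A + φ #(offLevels A k) ≤ a)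
    (hb : #(F \ A) + φ #(offLevels (F \ A) k) ≤ b) :
    #F + φ #(offLevels F k) ≤ a + b := by
  have hcard : (#(F \ A) + #A : ℝ) = #F := by exact_mod_cast card_sdiff_add_card_eq_card hAF
  have hoff := (hφ.mono (card_offLevels_le_add_sdiff F A k)).trans (hφ.add_le _ _)
  linarith

end IsShadowGain

end OffLevels

section TwoSperner

variable {n : ℕ} {F : Finset (Finset (Fin n))}

lemma TwoSperner.exists_antichain_partition (hF : TwoSperner F) :
    ∃ A ⊆ F, IsAntichain (· ⊆ ·) (A : Set (Finset (Fin n))) ∧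
      IsAntichain (· ⊆ ·) ((F \ A : Finset (Finset (Fin n))) : Set (Finset (Fin n))) ∧
      ∀ X ∈ F \ A, ∀ Z ∈ A, ¬X ⊆ Z := by
  have hbelow {S : Finset (Fin n)} (hS : S ∈ F \ {S ∈ F | ∀ B ∈ F, ¬B ⊂ S}) :
      ∃ B ∈ F, B ⊂ S := by
    simpa using (mem_sdiff.1 hS).2 ∘ fun h ↦ mem_filter.2 ⟨(mem_sdiff.1 hS).1, h⟩
  refine ⟨{S ∈ F | ∀ B ∈ F, ¬B ⊂ S}, filter_subset _ _, ?_, ?_, ?_⟩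
  · intro X hX Y hY hne hXY
    exact (mem_filter.1 hY).2 X (mem_filter.1 hX).1 (hXY.ssubset_of_ne hne)
  · intro X hX Y hY hne hXY
    obtain ⟨W, hW, hWX⟩ := hbelow hX
    exact hF W hW X (mem_sdiff.1 hX).1 Y (mem_sdiff.1 hY).1 ⟨hWX, hXY.ssubset_of_ne hne⟩
  · intro X hX Z hZ hXZ
    obtain ⟨W, hW, hWX⟩ := hbelow hX
    exact (mem_filter.1 hZ).2 W hW (hWX.trans_subset hXZ)

lemma sdiff_levelFam_union_levelFam_succ (F : Finset (Finset (Fin n))) (k : ℕ) :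
    F \ (levelFam n k ∪ levelFam n (k + 1)) = offLevels F k := by
  ext S
  simp [levelFam, mem_offLevels]

variable {φ : ℕ → ℝ} {k : ℕ}

lemma TwoSperner.card_add_offLevels_le_of_odd (hF : TwoSperner F) (hφ : IsShadowGain (Fin n) φ)
    (hn : n = 2 * k + 1) : #F + φ #(offLevels F k) ≤ n.choose k + n.choose (k + 1) := by
  obtain ⟨A, hAF, hA, hB, -⟩ := hF.exists_antichain_partition
  have hbound {A : Finset (Finset (Fin n))} (hA : IsAntichain (· ⊆ ·) (A : Set (Finset (Fin n)))) :
      #A + φ #(offLevels A k) ≤ n.choose (k + 1) := by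
    simpa only [Fintype.card_fin] using hφ.card_add_offLevels_le_choose hA
      (by rw [Fintype.card_fin]; omega : k + (k + 1) = _) (by omega) (by omega)
      (card_le_card_shadow_of_card_lt (by rw [Fintype.card_fin]; omega) (sized_falling _ _))
  have hsymm : n.choose k = n.choose (k + 1) := by rw [hn, Nat.choose_symm_half]
  rw [hsymm]
  exact hφ.card_add_offLevels_le_add hAF (hbound hA) (hbound hB)

/- With `B = F \ A`, one of `falling (k + 1) A` and `falling (k + 1) Bᶜˢ` contains at most half of
the middle level, hence expands; that antichain is compared with level `k` or `k + 2`, the other one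
with the middle level. -/
lemma TwoSperner.card_add_offLevels_le_of_even (hF : TwoSperner F) (hφ : IsShadowGain (Fin n) φ)
    (hn : n = 2 * (k + 1)) :
    #F + φ #(offLevels F k) ≤ n.choose (k + 1) + n.choose (k + 2) ∨
      #F + φ #(offLevels F (k + 1)) ≤ n.choose (k + 1) + n.choose (k + 2) := by
  obtain ⟨A, hAF, hA, hB, hBA⟩ := hF.exists_antichain_partition
  have hcard : Fintype.card (Fin n) = 2 * (k + 1) := by rw [Fintype.card_fin, hn]
  have hcentral {A : Finset (Finset (Fin n))} {j : ℕ} (hj : k + 1 = j ∨ k + 1 = j + 1)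
      (hA : IsAntichain (· ⊆ ·) (A : Set (Finset (Fin n)))) :
      #A + φ #(offLevels A j) ≤ n.choose (k + 1) := by
    simpa only [Fintype.card_fin] using
      hφ.card_add_offLevels_le_choose_half hA (by omega : (k + 1) + (k + 1) = _) hj
  have hshifted {A : Finset (Finset (Fin n))}
      (hA : IsAntichain (· ⊆ ·) (A : Set (Finset (Fin n))))
      (hhalf : 2 * #(falling (k + 1) Aᶜˢ) ≤ (2 * (k + 1)).choose (k + 1)) :
      #A + φ #(offLevels A (k + 1)) ≤ n.choose (k + 2) := by
    simpa only [Fintype.card_fin] using hφ.card_add_offLevels_le_choose hA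
      (by omega : k + (k + 1 + 1) = _) (by omega) (by omega)
      (card_le_card_shadow_of_two_mul_card_le (sized_falling _ _) hhalf)
  have hdichotomy := card_falling_add_card_falling_compls_le
    (by omega : (k + 1) + (k + 1) = Fintype.card (Fin n)) hBA
  rw [hcard] at hdichotomy
  rcases le_total #(falling (k + 1) A) #(falling (k + 1) (F \ A)ᶜˢ) with hle | hle
  · left
    have hA' := hshifted (isAntichain_compls hA) (by rw [compls_compls]; omega)
    rw [card_compls, card_offLevels_compls A (by omega : k + (k + 1) + 1 = _)] at hA'
    rw [add_comm (n.choose (k + 1) : ℝ)]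
    exact hφ.card_add_offLevels_le_add hAF hA' (hcentral (.inr rfl) hB)
  · right
    exact hφ.card_add_offLevels_le_add hAF (hcentral (.inl rfl) hA) (hshifted hB (by omega))

lemma TwoSperner.exists_sigmaStar_card_add_le (hF : TwoSperner F) (hφ : IsShadowGain (Fin n) φ)
    (hn : n ≠ 0) : ∃ S ∈ SigmaStar n, #F + φ #(F \ S) ≤ Sigma2 n := by
  simp only [SigmaStar, Set.mem_insert_iff, Set.mem_singleton_iff, exists_eq_or_imp,
    exists_eq_left, Sigma2, Nat.cast_add]
  rcases n.even_or_odd' with ⟨k, hk | hk⟩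
  · obtain ⟨k, rfl⟩ := Nat.exists_eq_succ_of_ne_zero (by omega : k ≠ 0)
    rw [(by omega : n / 2 = k + 1), (by omega : (n + 1) / 2 = k + 1), Nat.add_sub_cancel,
      sdiff_levelFam_union_levelFam_succ, sdiff_levelFam_union_levelFam_succ]
    exact (hF.card_add_offLevels_le_of_even hφ hk).symm
  · rw [(by omega : n / 2 = k), sdiff_levelFam_union_levelFam_succ]
    exact .inl (hF.card_add_offLevels_le_of_odd hφ hk)

end TwoSperner

lemma choose_le_choose_add_add (a b c : ℕ) : a.choose b ≤ (a + c).choose (b + c) := by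
  induction c with
  | zero => rfl
  | succ c ih => exact ih.trans ((Nat.le_add_right _ _).trans_eq (Nat.choose_succ_succ' _ _).symm)

lemma exists_forall_choose_floor_le {ε : ℝ} (hε : 0 < ε) :
    ∃ n₀ : ℕ, ∀ n ≥ n₀, ⌊(1 - ε) * (n : ℝ)⌋₊.choose (n / 2) ≤
      (2 * ((n + 1) / 2) - 3).choose ((n + 1) / 2 + 1) := by
  refine ⟨⌈4 / ε⌉₊ + 4, fun n hn ↦ ?_⟩
  have hεn : 4 ≤ n * ε := by
    rw [← div_le_iff₀ hε]
    exact (Nat.le_ceil _).trans (by exact_mod_cast (by omega : ⌈4 / ε⌉₊ ≤ n))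
  have hfloor : ⌊(1 - ε) * (n : ℝ)⌋₊ ≤ n - 4 := by
    refine Nat.floor_le_of_le ?_
    push_cast [show 4 ≤ n by omega]
    linarith
  obtain ⟨c, hc⟩ : ∃ c, (n + 1) / 2 + 1 = n / 2 + c := ⟨(n + 1) / 2 + 1 - n / 2, by omega⟩
  rw [hc]
  exact (choose_le_choose_add_add _ _ c).trans (Nat.choose_le_choose _ (by omega))

theorem two_sperner_stability_general {n m : ℕ} (hm : 1 ≤ m)
    (hm' : m ≤ (2 * ((n + 1) / 2) - 3).choose ((n + 1) / 2 + 1)) (F : Finset (Finset (Fin n)))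
    (hF : TwoSperner F) (hS : ∀ S ∈ SigmaStar n, m ≤ #(F \ S)) :
    (#F : ℝ) ≤ Sigma2 n - gval ((n + 1) / 2 + 1) m := by
  have hn : n ≠ 0 := by
    rintro rfl
    exact absurd (hm.trans hm') (by decide)
  have hgain : IsShadowGain (Fin n) (truncatedGval ((n + 1) / 2) m) :=
    isShadowGain_truncatedGval (by rw [Fintype.card_fin]; omega) (by rw [Fintype.card_fin]; omega)
      hm hm'
  obtain ⟨S, hSmem, hle⟩ := hF.exists_sigmaStar_card_add_le hgain hn
  rw [truncatedGval_of_ge (by omega) (hS S hSmem)] at hle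
  linarith

/-- Stability for 2-Sperner families: if `F` is 2-Sperner, `1 ≤ m ≤ C(⌊(1−ε)n⌋,⌊n/2⌋)` and
`|F \ S| ≥ m` for every `S ∈ Σ*(n,2)`, then `|F| ≤ Σ(n,2) − g(⌈n/2⌉+1, m)`. -/
theorem two_sperner_stability (ε : ℝ) (hε : 0 < ε ∧ ε < 1) :
    ∃ n₀ : ℕ, ∀ n : ℕ, n₀ ≤ n → ∀ m : ℕ, 1 ≤ m →
      m ≤ Nat.choose ⌊(1 - ε) * (n : ℝ)⌋₊ (n / 2) →
      ∀ F : Finset (Finset (Fin n)), TwoSperner F →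
      (∀ S ∈ SigmaStar n, m ≤ (F \ S).card) →
      (F.card : ℝ) ≤ (Sigma2 n : ℝ) - gval ((n + 1) / 2 + 1) (m : ℝ) := by
  obtain ⟨n₀, hn₀⟩ := exists_forall_choose_floor_le hε.1
  exact ⟨n₀, fun n hn m hm hm' ↦ two_sperner_stability_general hm (hm'.trans (hn₀ n hn))⟩
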